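/- Let (t, n, b) be a smooth right-handed orthonormal frame on an open set U ⊆ ℝ³, let α be smooth and nowhere zero, μ smooth, J = α(n + μb), J^⊥ = α(b − μn), and suppose J satisfies the Jacobi identity J·(curl J) = 0 on U. Let H be a smooth scalar function and v a smooth nowhere-zero vector field on U with v = J × ∇H and t = v/‖v‖. Then at every point of U: ∂_s ln(‖v‖ / (α²(1 + μ²))) = (J·(curl J^⊥)) / (α²(1 + μ²)). -/

import Mathlib

/-!
Write `J = α(n + μb)`, `J⊥ = α(b − μn)` and `w = α²(1 + μ²) = ‖J‖²`. Taking the cross product of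
`v = J × ∇H` with `J` and using `J × t = −J⊥` gives `∇H = a J + c J⊥` with `a = (J·∇H)/w` and
`c = ‖v‖/w` (`grad_decomp`). The curl of the left side vanishes; dotting the curl of the right side
with `J` kills both `a`-terms, since `J·(∇a × J) = 0` and `J·curl J = 0`, and leaves
`(J × J⊥)·∇c = c J·curl J⊥` (`cross_dot_grad_coeff`). As `J × J⊥ = w t`, dividing by `c w` is the
claim for `∂ₛ ln c`.
-/

noncomputable section

/-- Three-dimensional Euclidean space. -/
abbrev E3 : Type := EuclideanSpace ℝ (Fin 3)

/-- The Euclidean dot product on ℝ³. -/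
def dot (u v : E3) : ℝ := ∑ i, u i * v i

/-- The cross product on ℝ³. -/
def cross (u v : E3) : E3 :=
  (WithLp.equiv 2 (Fin 3 → ℝ)).symm
    ![u 1 * v 2 - u 2 * v 1, u 2 * v 0 - u 0 * v 2, u 0 * v 1 - u 1 * v 0]

/-- Partial derivative of a scalar function in the `i`-th coordinate direction. -/
def pd (i : Fin 3) (f : E3 → ℝ) (x : E3) : ℝ :=
  fderiv ℝ f x (EuclideanSpace.single i 1)

/-- The gradient ∇f of a scalar function. -/
def grad (f : E3 → ℝ) (x : E3) : E3 :=
  (WithLp.equiv 2 (Fin 3 → ℝ)).symm ![pd 0 f x, pd 1 f x, pd 2 f x]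

/-- The curl ∇×F of a vector field. -/
def curl (F : E3 → E3) (x : E3) : E3 :=
  (WithLp.equiv 2 (Fin 3 → ℝ)).symm
    ![pd 1 (fun y => F y 2) x - pd 2 (fun y => F y 1) x,
      pd 2 (fun y => F y 0) x - pd 0 (fun y => F y 2) x,
      pd 0 (fun y => F y 1) x - pd 1 (fun y => F y 0) x]

/-- Directional derivative ∂ₛ f = t·∇f of a scalar function along a vector field t. -/
def ds (t : E3 → E3) (f : E3 → ℝ) (x : E3) : ℝ := dot (t x) (grad f x)

/-- Componentwise directional derivative (u·∇)w of a vector field w along u. -/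
def dirDeriv (u w : E3 → E3) (x : E3) : E3 :=
  (WithLp.equiv 2 (Fin 3 → ℝ)).symm
    ![fderiv ℝ (fun y => w y 0) x (u x),
      fderiv ℝ (fun y => w y 1) x (u x),
      fderiv ℝ (fun y => w y 2) x (u x)]

/-- Helicity density w·(curl w) of a vector field. -/
def hel (w : E3 → E3) (x : E3) : ℝ := dot (w x) (curl w x)

/-- Cross-helicity sum n·(curl b) + b·(curl n). -/
def crossHel (n b : E3 → E3) (x : E3) : ℝ :=
  dot (n x) (curl b x) + dot (b x) (curl n x)

/-- A smooth right-handed orthonormal (Serret–Frenet type) frame on U. -/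
def IsFrameOn (t n b : E3 → E3) (U : Set E3) : Prop :=
  ContDiffOn ℝ (⊤ : ℕ∞) t U ∧ ContDiffOn ℝ (⊤ : ℕ∞) n U ∧ ContDiffOn ℝ (⊤ : ℕ∞) b U ∧
  ∀ x ∈ U, ‖t x‖ = 1 ∧ ‖n x‖ = 1 ∧ ‖b x‖ = 1 ∧
    dot (t x) (n x) = 0 ∧ dot (t x) (b x) = 0 ∧ dot (n x) (b x) = 0 ∧
    b x = cross (t x) (n x)

open Filter Topology

@[simp] lemma cross_zero (u v : E3) : cross u v 0 = u 1 * v 2 - u 2 * v 1 := rfl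

@[simp] lemma cross_one (u v : E3) : cross u v 1 = u 2 * v 0 - u 0 * v 2 := rfl

@[simp] lemma cross_two (u v : E3) : cross u v 2 = u 0 * v 1 - u 1 * v 0 := rfl

@[simp] lemma grad_apply (f : E3 → ℝ) (x : E3) (i : Fin 3) : grad f x i = pd i f x := by
  fin_cases i <;> rfl

lemma dot_eq (u v : E3) : dot u v = u 0 * v 0 + u 1 * v 1 + u 2 * v 2 := by
  simp [dot, Fin.sum_univ_three]

lemma curl_zero (F : E3 → E3) (x : E3) :
    curl F x 0 = pd 1 (fun y => F y 2) x - pd 2 (fun y => F y 1) x := rfl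

lemma curl_one (F : E3 → E3) (x : E3) :
    curl F x 1 = pd 2 (fun y => F y 0) x - pd 0 (fun y => F y 2) x := rfl

lemma curl_two (F : E3 → E3) (x : E3) :
    curl F x 2 = pd 0 (fun y => F y 1) x - pd 1 (fun y => F y 0) x := rfl

lemma dot_self_of_norm_one {u : E3} (h : ‖u‖ = 1) :
    u 0 * u 0 + u 1 * u 1 + u 2 * u 2 = 1 := by
  have := EuclideanSpace.real_norm_sq_eq u
  rw [h, Fin.sum_univ_three] at this
  linarith

lemma pd_comm {H : E3 → ℝ} {x : E3} (hH : ContDiffAt ℝ 2 H x) (i j : Fin 3) :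
    pd i (pd j H) x = pd j (pd i H) x := by
  have hd : DifferentiableAt ℝ (fderiv ℝ H) x :=
    (hH.fderiv_right (m := 1) (by norm_num)).differentiableAt (by norm_num)
  have hs := hH.isSymmSndFDerivAt (by simp)
  have key (k l : Fin 3) : pd k (pd l H) x =
      fderiv ℝ (fderiv ℝ H) x (EuclideanSpace.single k 1) (EuclideanSpace.single l 1) := by
    unfold pd
    rw [fderiv_clm_apply hd (differentiableAt_const _)]
    simp
  rw [key, key, hs.eq]

/-- The `P`-component of `curl (∇H) = 0` when `∇H = a P + c Q` near `x` and `P` satisfies the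
Jacobi identity at `x`. -/
lemma cross_dot_grad_coeff {H a c : E3 → ℝ} {P Q : E3 → E3} {x : E3}
    (hH : ContDiffAt ℝ 2 H x) (ha : DifferentiableAt ℝ a x) (hc : DifferentiableAt ℝ c x)
    (hP : DifferentiableAt ℝ P x) (hQ : DifferentiableAt ℝ Q x)
    (hdec : ∀ᶠ y in 𝓝 x, grad H y = a y • P y + c y • Q y)
    (hjac : dot (P x) (curl P x) = 0) :
    dot (cross (P x) (Q x)) (grad c x) = c x * dot (P x) (curl Q x) := by
  have hPi (i : Fin 3) : DifferentiableAt ℝ (fun y => P y i) x := by fun_prop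
  have hQi (i : Fin 3) : DifferentiableAt ℝ (fun y => Q y i) x := by fun_prop
  have key (i j : Fin 3) : pd i (pd j H) x =
      a x * pd i (fun y => P y j) x + pd i a x * P x j +
        (c x * pd i (fun y => Q y j) x + pd i c x * Q x j) := by
    have he : pd j H =ᶠ[𝓝 x] fun y => a y * P y j + c y * Q y j := by
      filter_upwards [hdec] with y hy
      rw [← grad_apply, hy]
      simp
    have h1 := (ha.hasFDerivAt.mul (hPi j).hasFDerivAt).add
      (hc.hasFDerivAt.mul (hQi j).hasFDerivAt)
    have h2 : fderiv ℝ (pd j H) x = _ := (h1.congr_of_eventuallyEq he).fderiv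
    unfold pd at h2 ⊢
    rw [h2]
    simp
    ring
  have h01 := pd_comm hH 0 1
  have h12 := pd_comm hH 1 2
  have h20 := pd_comm hH 2 0
  rw [key, key] at h01 h12 h20
  rw [dot_eq, curl_zero, curl_one, curl_two] at hjac
  rw [dot_eq, dot_eq, curl_zero, curl_one, curl_two]
  simp only [cross_zero, cross_one, cross_two, grad_apply]
  linear_combination a x * hjac - P x 0 * h12 - P x 1 * h20 - P x 2 * h01

/-- Pointwise decomposition of a vector `g` in the basis `J, J⊥` of the normal plane, with the
`J⊥`-coefficient read off from `J × g = φ t`. -/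
lemma grad_decomp {t n b g : E3} {α μ φ : ℝ} (hα : α ≠ 0) (htt : ‖t‖ = 1) (hnn : ‖n‖ = 1)
    (hbb : ‖b‖ = 1) (htn : dot t n = 0) (hnb : dot n b = 0) (hb : b = cross t n)
    (hg : φ • t = cross (α • (n + μ • b)) g) :
    g = (dot (α • (n + μ • b)) g / (α ^ 2 * (1 + μ ^ 2))) • (α • (n + μ • b)) +
      (φ / (α ^ 2 * (1 + μ ^ 2))) • (α • (b - μ • n)) := by
  have hw : α ^ 2 * (1 + μ ^ 2) ≠ 0 := by positivity
  replace htt := dot_self_of_norm_one htt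
  replace hnn := dot_self_of_norm_one hnn
  replace hbb := dot_self_of_norm_one hbb
  rw [dot_eq] at htn hnb
  have b0 := congrArg (fun u : E3 => u 0) hb
  have b1 := congrArg (fun u : E3 => u 1) hb
  have b2 := congrArg (fun u : E3 => u 2) hb
  have g0 := congrArg (fun u : E3 => u 0) hg
  have g1 := congrArg (fun u : E3 => u 1) hg
  have g2 := congrArg (fun u : E3 => u 2) hg
  simp only [cross_zero, cross_one, cross_two, PiLp.smul_apply, PiLp.add_apply,
    smul_eq_mul] at b0 b1 b2 g0 g1 g2
  -- `b × t = n`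
  have n0 : b 1 * t 2 - b 2 * t 1 = n 0 := by
    rw [b1, b2]; linear_combination n 0 * htt - t 0 * htn
  have n1 : b 2 * t 0 - b 0 * t 2 = n 1 := by
    rw [b0, b2]; linear_combination n 1 * htt - t 1 * htn
  have n2 : b 0 * t 1 - b 1 * t 0 = n 2 := by
    rw [b0, b1]; linear_combination n 2 * htt - t 2 * htn
  have hPP : (α * (n 0 + μ * b 0)) ^ 2 + (α * (n 1 + μ * b 1)) ^ 2 +
      (α * (n 2 + μ * b 2)) ^ 2 = α ^ 2 * (1 + μ ^ 2) := by
    linear_combination α ^ 2 * hnn + α ^ 2 * μ ^ 2 * hbb + 2 * α ^ 2 * μ * hnb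
  -- The components of `w g = (J·g) J − J × (J × g)`, with `J × t = −J⊥`.
  ext i
  fin_cases i <;>
    simp only [dot_eq, PiLp.smul_apply, PiLp.add_apply, PiLp.sub_apply, smul_eq_mul,
      Fin.zero_eta, Fin.mk_one, Fin.reduceFinMk] <;>
    rw [div_mul_eq_mul_div, div_mul_eq_mul_div, ← add_div, eq_div_iff hw]
  · linear_combination -g 0 * hPP + (α * (n 1 + μ * b 1)) * g2 - (α * (n 2 + μ * b 2)) * g1 -
      φ * α * b0 - φ * α * μ * n0
  · linear_combination -g 1 * hPP + (α * (n 2 + μ * b 2)) * g0 - (α * (n 0 + μ * b 0)) * g2 -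
      φ * α * b1 - φ * α * μ * n1
  · linear_combination -g 2 * hPP + (α * (n 0 + μ * b 0)) * g1 - (α * (n 1 + μ * b 1)) * g0 -
      φ * α * b2 - φ * α * μ * n2

/-- `J × J⊥ = α²(1 + μ²) t`. -/
lemma cross_perp {t n b : E3} {α μ : ℝ} (hnn : ‖n‖ = 1) (htn : dot t n = 0)
    (hb : b = cross t n) :
    cross (α • (n + μ • b)) (α • (b - μ • n)) = (α ^ 2 * (1 + μ ^ 2)) • t := by
  replace hnn := dot_self_of_norm_one hnn
  rw [dot_eq] at htn
  subst hb
  ext i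
  fin_cases i <;>
    simp only [cross_zero, cross_one, cross_two, PiLp.smul_apply, PiLp.add_apply,
      PiLp.sub_apply, smul_eq_mul, Fin.zero_eta, Fin.mk_one, Fin.reduceFinMk]
  · linear_combination α ^ 2 * (1 + μ ^ 2) * (t 0 * hnn - n 0 * htn)
  · linear_combination α ^ 2 * (1 + μ ^ 2) * (t 1 * hnn - n 1 * htn)
  · linear_combination α ^ 2 * (1 + μ ^ 2) * (t 2 * hnn - n 2 * htn)

/-- ∂ₛ ln(‖v‖/(α²(1+μ²))) = (J·curl J^⊥)/(α²(1+μ²)) for a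
Hamiltonian structure with Poisson vector J = α(n + μb), J^⊥ = α(b − μn). -/
theorem integrability_condition_for_H
    (U : Set E3) (hU : IsOpen U) (t n b : E3 → E3)
    (hframe : IsFrameOn t n b U)
    (α μ : E3 → ℝ)
    (hα : ContDiffOn ℝ (⊤ : ℕ∞) α U) (hμ : ContDiffOn ℝ (⊤ : ℕ∞) μ U)
    (hα0 : ∀ x ∈ U, α x ≠ 0)
    (hjac : ∀ x ∈ U, dot (α x • (n x + μ x • b x))
        (curl (fun y => α y • (n y + μ y • b y)) x) = 0)
    (H : E3 → ℝ) (hH : ContDiffOn ℝ (⊤ : ℕ∞) H U)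
    (v : E3 → E3) (hv : ContDiffOn ℝ (⊤ : ℕ∞) v U) (hv0 : ∀ x ∈ U, v x ≠ 0)
    (hham : ∀ x ∈ U, v x = cross (α x • (n x + μ x • b x)) (grad H x))
    (ht : ∀ x ∈ U, t x = ‖v x‖⁻¹ • v x) :
    ∀ x ∈ U,
      ds t (fun y => Real.log (‖v y‖ / (α y ^ 2 * (1 + μ y ^ 2)))) x
        = dot (α x • (n x + μ x • b x))
            (curl (fun y => α y • (b y - μ y • n y)) x)
          / (α x ^ 2 * (1 + μ x ^ 2)) := by
  intro x hx
  obtain ⟨-, hn, hb, hfr⟩ := hframe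
  have hUx : U ∈ 𝓝 x := hU.mem_nhds hx
  have dα : DifferentiableAt ℝ α x := (hα.contDiffAt hUx).differentiableAt (by simp)
  have dμ : DifferentiableAt ℝ μ x := (hμ.contDiffAt hUx).differentiableAt (by simp)
  have dn : DifferentiableAt ℝ n x := (hn.contDiffAt hUx).differentiableAt (by simp)
  have db : DifferentiableAt ℝ b x := (hb.contDiffAt hUx).differentiableAt (by simp)
  have dv : DifferentiableAt ℝ v x := (hv.contDiffAt hUx).differentiableAt (by simp)
  have hH2 : ContDiffAt ℝ 2 H x :=
    (hH.contDiffAt hUx).of_le (WithTop.coe_le_coe.2 (le_top : (2 : ℕ∞) ≤ ⊤))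
  have hw0 : α x ^ 2 * (1 + μ x ^ 2) ≠ 0 := by
    have := hα0 x hx
    positivity
  have dw : DifferentiableAt ℝ (fun y => α y ^ 2 * (1 + μ y ^ 2)) x := by fun_prop
  have dwi : DifferentiableAt ℝ (fun y => (α y ^ 2 * (1 + μ y ^ 2))⁻¹) x := dw.inv hw0
  have dP : DifferentiableAt ℝ (fun y => α y • (n y + μ y • b y)) x := by fun_prop
  have dQ : DifferentiableAt ℝ (fun y => α y • (b y - μ y • n y)) x := by fun_prop
  have dpd (i : Fin 3) : DifferentiableAt ℝ (pd i H) x := by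
    have hd : DifferentiableAt ℝ (fderiv ℝ H) x :=
      (hH2.fderiv_right (m := 1) (by norm_num)).differentiableAt (by norm_num)
    exact hd.clm_apply (differentiableAt_const _)
  have dPi (i : Fin 3) : DifferentiableAt ℝ (fun y => (α y • (n y + μ y • b y)) i) x := by
    fun_prop
  have da : DifferentiableAt ℝ (fun y => dot (α y • (n y + μ y • b y)) (grad H y) /
      (α y ^ 2 * (1 + μ y ^ 2))) x := by
    simp only [dot_eq, grad_apply, div_eq_mul_inv]
    refine DifferentiableAt.fun_mul ?_ dwi
    exact (((dPi 0).mul (dpd 0)).add ((dPi 1).mul (dpd 1))).add ((dPi 2).mul (dpd 2))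
  have dc : DifferentiableAt ℝ (fun y => ‖v y‖ / (α y ^ 2 * (1 + μ y ^ 2))) x := by
    simp only [div_eq_mul_inv]
    exact (dv.norm ℝ (hv0 x hx)).fun_mul dwi
  have hdec : ∀ᶠ y in 𝓝 x, grad H y =
      (dot (α y • (n y + μ y • b y)) (grad H y) / (α y ^ 2 * (1 + μ y ^ 2))) •
        (α y • (n y + μ y • b y)) +
      (‖v y‖ / (α y ^ 2 * (1 + μ y ^ 2))) • (α y • (b y - μ y • n y)) := by
    filter_upwards [hUx] with y hy
    obtain ⟨h1, h2, h3, h4, -, h6, h7⟩ := hfr y hy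
    refine grad_decomp (hα0 y hy) h1 h2 h3 h4 h6 h7 ?_
    rw [← hham y hy, ht y hy, smul_smul, mul_inv_cancel₀ (norm_ne_zero_iff.2 (hv0 y hy)),
      one_smul]
  have key := cross_dot_grad_coeff hH2 da dc dP dQ hdec (hjac x hx)
  obtain ⟨-, h2, -, h4, -, -, h7⟩ := hfr x hx
  rw [cross_perp h2 h4 h7] at key
  have hc0 : ‖v x‖ / (α x ^ 2 * (1 + μ x ^ 2)) ≠ 0 :=
    div_ne_zero (norm_ne_zero_iff.2 (hv0 x hx)) hw0
  have hlog (i : Fin 3) :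
      pd i (fun y => Real.log (‖v y‖ / (α y ^ 2 * (1 + μ y ^ 2)))) x =
        (‖v x‖ / (α x ^ 2 * (1 + μ x ^ 2)))⁻¹ *
          pd i (fun y => ‖v y‖ / (α y ^ 2 * (1 + μ y ^ 2))) x := by
    unfold pd
    rw [fderiv.log dc hc0]
    rfl
  rw [eq_div_iff hw0, ← mul_right_inj' hc0, ← key, ds, dot_eq, dot_eq]
  simp only [grad_apply, hlog, PiLp.smul_apply, smul_eq_mul]
  generalize ‖v x‖ / (α x ^ 2 * (1 + μ x ^ 2)) = c at hc0 ⊢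
  field_simp
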